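/- Let $q$ be an odd prime power, $A = \mathbb{F}_q[t]$, $F = \mathbb{F}_q(t)$, and let $\mathfrak{p}, \mathfrak{q}, \mathfrak{l} \in A$ be distinct monic irreducible polynomials with $\deg(\mathfrak{l}) \geq 2(\deg(\mathfrak{p}) + \deg(\mathfrak{q})) - 1$. Then there exist $a \in A$ with $\deg(a) \leq \deg(\mathfrak{p}) + \deg(\mathfrak{q}) - 1$ and $c \in \mathbb{F}_q^\times$ such that the polynomial $x^2 - ax + c\mathfrak{l}$ is irreducible over each of the three completions $F_\mathfrak{p}$, $F_\mathfrak{q}$, and $F_\infty$. -/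

import Mathlib

open Polynomial IsDedekindDomain

/-- The embedding `𝔽_q[t] → F_∞ = 𝔽_q((1/t))` sending `t` to the inverse uniformizer. -/
noncomputable def infPlace (F : Type*) [Field F] : Polynomial F →+* LaurentSeries F :=
  (Polynomial.aeval (HahnSeries.single (-1 : ℤ) (1 : F))).toRingHom

/-!
Over a finite field `k`, the map `x ↦ x + d / x` from `kˣ` to `k` is not surjective, and a value
`α` that it omits makes `x² - αx + d` irreducible. A monic polynomial that is irreducible over the
residue field at a finite place is irreducible over the completion by Gauss's lemma, so finitely
many finite places only prescribe residues of `a`; the Chinese remainder theorem provides an `a`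
of degree less than the degree of the product of the primes.

Then `deg a² < deg b` for `b = c𝔩`. At infinity, a root `x` would satisfy `-b = x (x - a)`, where
`a` has larger order than `x` because `a²` has larger order than `b`. So `x` and `x - a` have the
same leading term, whence `deg b` is even and `-lc(b) = lc(x)²`. If `deg 𝔩` is even, `c` is chosen
such that `-lc(b)` is not a square.
-/

section Quadratic

theorem monic_X_sq_sub_C_mul_X_add_C {R : Type*} [Ring R] (a b : R) :
    (X ^ 2 - C a * X + C b : R[X]).Monic := by
  monicity!

theorem irreducible_X_sq_sub_C_mul_X_add_C {K : Type*} [Field K] {a b : K}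
    (h : ∀ x : K, x ^ 2 - a * x + b ≠ 0) : Irreducible (X ^ 2 - C a * X + C b : K[X]) := by
  have hdeg : (X ^ 2 - C a * X + C b : K[X]).natDegree = 2 := by compute_degree!
  refine irreducible_of_degree_le_three_of_not_isRoot (by simp [hdeg]) fun x hx => h x ?_
  simpa using hx

theorem exists_irreducible_X_sq_sub_C_mul_X_add_C {k : Type*} [Field k] [Finite k] {d : k}
    (hd : d ≠ 0) : ∃ α : k, Irreducible (X ^ 2 - C α * X + C d : k[X]) := by
  have hcard : Nat.card kˣ < Nat.card k := by
    rw [Nat.card_units]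
    exact Nat.sub_lt Nat.card_pos one_pos
  have hsurj : ¬ Function.Surjective fun x : kˣ => (x + d / x : k) := fun h =>
    hcard.not_ge (Nat.card_le_card_of_surjective _ h)
  obtain ⟨α, hα⟩ := not_forall.1 hsurj
  refine ⟨α, irreducible_X_sq_sub_C_mul_X_add_C fun x hx => hα ?_⟩
  have hx0 : x ≠ 0 := by
    rintro rfl
    simp [hd] at hx
  refine ⟨Units.mk0 x hx0, ?_⟩
  simp only [Units.val_mk0]
  field_simp
  linear_combination hx

end Quadratic

section AdicCompletion

variable {R : Type*} [CommRing R] [IsDedekindDomain R] (K : Type*) [Field K] [Algebra R K]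
  [IsFractionRing R K] (v : HeightOneSpectrum R)

theorem residue_adicCompletionIntegers_eq_zero_iff (x : v.adicCompletionIntegers K) :
    IsLocalRing.residue _ x = 0 ↔ Valued.v (x : v.adicCompletion K) < 1 := by
  rw [IsLocalRing.residue_eq_zero_iff]
  exact Valuation.mem_maximalIdeal_iff _ (Valued.v : Valuation (v.adicCompletion K) _)

theorem ker_algebraMap_residueField_adicCompletionIntegers :
    RingHom.ker (algebraMap R (IsLocalRing.ResidueField (v.adicCompletionIntegers K))) =
      v.asIdeal := by
  ext r
  rw [RingHom.mem_ker, ← v.valuation_lt_one_iff_mem (K := K),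
    ← v.valuedAdicCompletion_eq_valuation']
  exact residue_adicCompletionIntegers_eq_zero_iff K v _

variable {K} in
theorem exists_valued_algebraMap_sub_lt_one {x : v.adicCompletion K} (hx : Valued.v x ≤ 1) :
    ∃ r : R, Valued.v (algebraMap R (v.adicCompletion K) r - x) < 1 := by
  have hnhds : {y : v.adicCompletion K | Valued.v (y - x) < 1} ∈ nhds x :=
    Valued.mem_nhds.2 ⟨1, fun y hy => by simpa using hy⟩
  obtain ⟨k, hk⟩ : ∃ k : K, Valued.v (algebraMap K (v.adicCompletion K) k - x) < 1 :=
    (v.denseRange_algebraMap K).mem_nhds hnhds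
  have hval (k : K) : Valued.v (algebraMap K (v.adicCompletion K) k) = v.valuation K k :=
    v.valuedAdicCompletion_eq_valuation' k
  have hk_le : v.valuation K k ≤ 1 := by
    rw [← hval, ← sub_add_cancel (algebraMap K (v.adicCompletion K) k) x]
    exact Valuation.map_add_le _ hk.le hx
  obtain ⟨r, hr⟩ := v.exists_valuation_sub_lt_of_integer hk_le 1
  rw [← hval, map_sub] at hr
  refine ⟨r, ?_⟩
  rw [IsScalarTower.algebraMap_apply R K, ← sub_add_sub_cancel _ (algebraMap K _ k)]
  exact Valuation.map_add_lt _ hr hk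

theorem algebraMap_residueField_adicCompletionIntegers_surjective :
    Function.Surjective
      (algebraMap R (IsLocalRing.ResidueField (v.adicCompletionIntegers K))) := by
  intro y
  obtain ⟨x, rfl⟩ := IsLocalRing.residue_surjective y
  obtain ⟨r, hr⟩ := exists_valued_algebraMap_sub_lt_one v x.2
  refine ⟨r, sub_eq_zero.1 ?_⟩
  exact (residue_adicCompletionIntegers_eq_zero_iff K v (algebraMap R _ r - x)).2 hr

/-- The isomorphism, induced by `algebraMap`, from the residue field `R ⧸ v` to the residue field of
the completion at `v`. It carries irreducibility modulo `v` over to the completion. -/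
noncomputable def quotientEquivResidueFieldAdicCompletionIntegers :
    R ⧸ v.asIdeal ≃+* IsLocalRing.ResidueField (v.adicCompletionIntegers K) :=
  (Ideal.quotEquivOfEq (ker_algebraMap_residueField_adicCompletionIntegers K v).symm).trans
    (RingHom.quotientKerEquivOfSurjective
      (algebraMap_residueField_adicCompletionIntegers_surjective K v))

theorem irreducible_map_adicCompletion {f : R[X]} (hf : f.Monic)
    (h : Irreducible (f.map (Ideal.Quotient.mk v.asIdeal))) :
    Irreducible (f.map ((algebraMap K (v.adicCompletion K)).comp (algebraMap R K))) := by
  let O := v.adicCompletionIntegers K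
  have hres : Irreducible ((f.map (algebraMap R O)).map (IsLocalRing.residue O)) := by
    rw [← MulEquiv.irreducible_iff (mapEquiv (quotientEquivResidueFieldAdicCompletionIntegers K v)),
      mapEquiv_apply, Polynomial.map_map] at h
    rwa [Polynomial.map_map]
  have hO : Irreducible (f.map (algebraMap R O)) :=
    (hf.map _).irreducible_of_irreducible_map _ _ hres
  rwa [(hf.map _).irreducible_iff_irreducible_map_fraction_map (K := v.adicCompletion K),
    Polynomial.map_map] at hO

end AdicCompletion

section Residues

variable {F : Type*} [Field F]

theorem finite_quotient_of_ne_bot [Finite F] {I : Ideal F[X]} (hI : I ≠ ⊥) :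
    Finite (F[X] ⧸ I) := by
  obtain ⟨P, rfl⟩ := (IsPrincipalIdealRing.principal I).principal
  have hP : P ≠ 0 := by
    rintro rfl
    simp at hI
  have : Module.Finite F (AdjoinRoot P) := (AdjoinRoot.powerBasis hP).finite
  exact Module.finite_of_finite F (M := AdjoinRoot P)

theorem exists_degree_lt_and_forall_mk_eq {ι : Type*} [Fintype ι] {I : ι → Ideal F[X]}
    (hcop : Pairwise (Function.onFun IsCoprime I)) {P : ι → F[X]} (hP : ∀ i, P i ≠ 0)
    (hI : ∀ i, I i = Ideal.span {P i}) (α : ∀ i, F[X] ⧸ I i) :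
    ∃ a : F[X], a.degree < (∑ i, (P i).natDegree : ℕ) ∧
      ∀ i, Ideal.Quotient.mk (I i) a = α i := by
  obtain ⟨r, hr⟩ := Ideal.pi_quotient_surjective hcop α
  have hprod : ∏ i, P i ≠ 0 := Finset.prod_ne_zero_iff.2 fun i _ => hP i
  refine ⟨r % ∏ i, P i, ?_, fun i => ?_⟩
  · rw [← natDegree_prod _ _ fun i _ => hP i, ← degree_eq_natDegree hprod]
    exact degree_mod_lt r hprod
  · rw [← hr i, Ideal.Quotient.mk_eq_mk_iff_sub_mem, hI, Ideal.mem_span_singleton]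
    have hdvd : ∏ i, P i ∣ r % (∏ i, P i) - r :=
      ⟨-(r / ∏ i, P i), by linear_combination EuclideanDomain.mod_add_div r (∏ i, P i)⟩
    exact (Finset.dvd_prod_of_mem P (Finset.mem_univ i)).trans hdvd

end Residues

section Infinity

theorem orderTop_eq_and_leadingCoeff_eq_of_root {Γ R : Type*} [AddCommGroup Γ] [LinearOrder Γ]
    [IsOrderedAddMonoid Γ] [CommRing R] [IsDomain R] {a b x : HahnSeries Γ R}
    (hab : b.orderTop < (a ^ 2).orderTop) (hx : x ^ 2 - a * x + b = 0) :
    b.orderTop = x.orderTop + x.orderTop ∧ -b.leadingCoeff = x.leadingCoeff ^ 2 := by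
  have hb : -b = x * (x - a) := by linear_combination -hx
  have hord : b.orderTop = x.orderTop + (x - a).orderTop := by
    rw [← HahnSeries.orderTop_neg, hb, HahnSeries.orderTop_mul]
  have hxa : x.orderTop < a.orderTop := by
    by_contra! hax
    have hsub : a.orderTop ≤ (x - a).orderTop :=
      (le_min hax le_rfl).trans HahnSeries.min_orderTop_le_orderTop_sub
    rw [sq, HahnSeries.orderTop_mul, hord] at hab
    exact hab.not_ge (add_le_add hax hsub)
  constructor
  · rw [hord, HahnSeries.orderTop_sub hxa]
  · rw [← HahnSeries.leadingCoeff_neg, hb, HahnSeries.leadingCoeff_mul,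
      HahnSeries.leadingCoeff_sub hxa, sq]

variable {F : Type*} [Field F]

theorem infPlace_monomial (n : ℕ) (c : F) :
    infPlace F (monomial n c) = HahnSeries.single (-n : ℤ) c := by
  simp [infPlace, aeval_monomial, LaurentSeries.algebraMap_apply, HahnSeries.single_pow,
    HahnSeries.C_apply]

theorem infPlace_coeff_neg (p : F[X]) (n : ℕ) : (infPlace F p).coeff (-n : ℤ) = p.coeff n := by
  induction p using Polynomial.induction_on' with
  | add p q hp hq => simp [hp, hq]
  | monomial m c => simp [infPlace_monomial, HahnSeries.coeff_single, coeff_monomial, eq_comm]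

theorem orderTop_infPlace {p : F[X]} (hp : p ≠ 0) :
    (infPlace F p).orderTop = (-p.natDegree : ℤ) := by
  have hlead : -(p.natDegree : ℤ) ∈ (infPlace F p).support := by simpa [infPlace_coeff_neg]
  refine HahnSeries.orderTop_eq_of_le hlead fun k hk => ?_
  by_contra! hlt
  obtain ⟨n, rfl⟩ : ∃ n : ℕ, k = -n := ⟨k.natAbs, by omega⟩
  rw [HahnSeries.mem_support, infPlace_coeff_neg] at hk
  exact hk (coeff_eq_zero_of_natDegree_lt (by omega))

theorem leadingCoeff_infPlace (p : F[X]) : (infPlace F p).leadingCoeff = p.leadingCoeff := by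
  rcases eq_or_ne p 0 with rfl | hp
  · simp
  have hne : infPlace F p ≠ 0 := by simp [← HahnSeries.orderTop_ne_top, orderTop_infPlace hp]
  have horder : (infPlace F p).order = -p.natDegree := by
    rw [← WithTop.coe_eq_coe, HahnSeries.order_eq_orderTop_of_ne_zero hne, orderTop_infPlace hp]
  rw [HahnSeries.leadingCoeff_eq, horder, infPlace_coeff_neg, leadingCoeff]

theorem orderTop_infPlace_lt_orderTop_infPlace {p q : F[X]} (h : p.degree < q.degree) :
    (infPlace F q).orderTop < (infPlace F p).orderTop := by
  have hq : q ≠ 0 := ne_zero_of_degree_gt h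
  rw [orderTop_infPlace hq]
  rcases eq_or_ne p 0 with rfl | hp
  · rw [map_zero, HahnSeries.orderTop_zero]
    exact WithTop.coe_lt_top _
  · rw [orderTop_infPlace hp, WithTop.coe_lt_coe]
    have := natDegree_lt_natDegree hp h
    omega

theorem irreducible_map_infPlace {a b : F[X]} (hab : (a ^ 2).degree < b.degree)
    (hb : Even b.natDegree → ¬ IsSquare (-b.leadingCoeff)) :
    Irreducible ((X ^ 2 - C a * X + C b : F[X][X]).map (infPlace F)) := by
  simp only [Polynomial.map_add, Polynomial.map_sub, Polynomial.map_mul, Polynomial.map_pow,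
    map_X, map_C]
  refine irreducible_X_sq_sub_C_mul_X_add_C fun x hx => ?_
  have hlt := orderTop_infPlace_lt_orderTop_infPlace hab
  rw [map_pow] at hlt
  obtain ⟨hord, hlc⟩ := orderTop_eq_and_leadingCoeff_eq_of_root hlt hx
  rw [orderTop_infPlace (ne_zero_of_degree_gt hab)] at hord
  have hxne : x ≠ 0 := by
    rintro rfl
    simp at hord
  rw [← HahnSeries.order_eq_orderTop_of_ne_zero hxne] at hord
  norm_cast at hord
  refine hb ?_ ⟨x.leadingCoeff, ?_⟩
  · rw [← Int.even_coe_nat]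
    exact ⟨-x.order, by omega⟩
  · rw [← leadingCoeff_infPlace, hlc, sq]

end Infinity

section GlobalChoice

theorem natDegree_le_sub_one_of_degree_lt {R : Type*} [Semiring R] {p : R[X]} {n : ℕ}
    (h : p.degree < n) : p.natDegree ≤ n - 1 :=
  natDegree_le_pred (natDegree_le_of_degree_le h.le) (coeff_eq_zero_of_degree_lt h)

theorem degree_sq_lt_degree {R : Type*} [Semiring R] {a b : R[X]} {n : ℕ} (ha : a.degree < n)
    (hb : b ≠ 0) (hn : 2 * n - 1 ≤ b.natDegree) : (a ^ 2).degree < b.degree := by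
  rcases eq_or_ne a 0 with rfl | ha0
  · simpa [bot_lt_iff_ne_bot] using hb
  · have hlt : a.natDegree < n := (natDegree_lt_iff_degree_lt ha0).2 ha
    have hsq : (a ^ 2).natDegree ≤ 2 * a.natDegree := natDegree_pow_le
    exact degree_lt_degree (by omega)

variable {F : Type*} [Field F]

theorem exists_ne_zero_not_isSquare_neg_leadingCoeff [Finite F] {b : F[X]} (hb : b ≠ 0)
    (h : ringChar F ≠ 2 ∨ Odd b.natDegree) :
    ∃ c : F, c ≠ 0 ∧ (Even b.natDegree → ¬ IsSquare (-(C c * b).leadingCoeff)) := by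
  rcases h with hchar | hodd
  · obtain ⟨s, hs⟩ := FiniteField.exists_nonsquare hchar
    have hs0 : s ≠ 0 := by
      rintro rfl
      exact hs IsSquare.zero
    have hlc : b.leadingCoeff ≠ 0 := leadingCoeff_ne_zero.2 hb
    refine ⟨-s / b.leadingCoeff, by simp [hs0, hb], fun _ => ?_⟩
    simpa [hlc] using hs
  · exact ⟨1, one_ne_zero, fun heven => absurd heven (Nat.not_even_iff_odd.2 hodd)⟩

theorem not_dvd_of_monic_of_irreducible_of_ne {P L : F[X]} (hP : Irreducible P) (hPm : P.Monic)
    (hL : Irreducible L) (hLm : L.Monic) (hPL : P ≠ L) : ¬ P ∣ L := fun h =>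
  hPL (eq_of_monic_of_associated hPm hLm (hP.associated_of_dvd hL h))

theorem eq_of_monic_of_span_singleton_eq {P Q : F[X]} (hP : P.Monic) (hQ : Q.Monic)
    (h : Ideal.span {P} = Ideal.span {Q}) : P = Q :=
  eq_of_monic_of_associated hP hQ (Ideal.span_singleton_eq_span_singleton.1 h)

theorem ringChar_ne_two_of_odd_card [Fintype F] (h : Odd (Fintype.card F)) : ringChar F ≠ 2 :=
  fun h2 => Nat.not_even_iff_odd.2 h (Nat.even_iff.2 (FiniteField.even_card_iff_char_two.1 h2))

end GlobalChoice

theorem exists_quadratic_irreducible_at_three_places_general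
    {F : Type*} [Field F] [Finite F] {ι : Type*} [Fintype ι]
    {v : ι → HeightOneSpectrum F[X]} (hv : Function.Injective v)
    {P : ι → F[X]} (hvP : ∀ i, (v i).asIdeal = Ideal.span {P i})
    {L : F[X]} (hL : L ≠ 0) (hPL : ∀ i, ¬ P i ∣ L)
    (hF : ringChar F ≠ 2 ∨ Odd L.natDegree)
    (hdeg : 2 * (∑ i, (P i).natDegree) - 1 ≤ L.natDegree) :
    ∃ (a : F[X]) (c : F), c ≠ 0 ∧ a.natDegree ≤ (∑ i, (P i).natDegree) - 1 ∧
      (∀ i, Irreducible ((X ^ 2 - C a * X + C (C c * L) : F[X][X]).map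
        ((algebraMap (RatFunc F) ((v i).adicCompletion (RatFunc F))).comp
          (algebraMap F[X] (RatFunc F))))) ∧
      Irreducible ((X ^ 2 - C a * X + C (C c * L) : F[X][X]).map (infPlace F)) := by
  have hmax (i) : (v i).asIdeal.IsMaximal := (v i).isMaximal
  have hP0 (i) : P i ≠ 0 := fun h => (v i).ne_bot (by rw [hvP, h]; simp)
  obtain ⟨c, hc, hsq⟩ := exists_ne_zero_not_isSquare_neg_leadingCoeff hL hF
  have hcL (i) : Ideal.Quotient.mk (v i).asIdeal (C c * L) ≠ 0 := by
    rw [Ne, Ideal.Quotient.eq_zero_iff_mem, hvP, Ideal.mem_span_singleton,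
      (isUnit_C.2 hc.isUnit).dvd_mul_left]
    exact hPL i
  have hres (i) : ∃ α, Irreducible (X ^ 2 - C α * X +
      C (Ideal.Quotient.mk (v i).asIdeal (C c * L))) :=
    letI := Ideal.Quotient.field (v i).asIdeal
    have := finite_quotient_of_ne_bot (v i).ne_bot
    exists_irreducible_X_sq_sub_C_mul_X_add_C (hcL i)
  choose α hα using hres
  obtain ⟨a, hdega, ha⟩ := exists_degree_lt_and_forall_mk_eq
    (fun i j hij => HeightOneSpectrum.isCoprime_of_ne _ _ (hv.ne hij)) hP0 hvP α
  refine ⟨a, c, hc, natDegree_le_sub_one_of_degree_lt hdega, fun i => ?_, ?_⟩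
  · refine irreducible_map_adicCompletion _ _ (monic_X_sq_sub_C_mul_X_add_C _ _) ?_
    simpa [ha] using hα i
  · have hcLdeg : (C c * L).natDegree = L.natDegree := natDegree_C_mul hc
    have hcL0 : C c * L ≠ 0 := by simp [hc, hL]
    have hlt : (a ^ 2).degree < (C c * L).degree :=
      degree_sq_lt_degree hdega hcL0 (hcLdeg ▸ hdeg)
    exact irreducible_map_infPlace hlt (hcLdeg ▸ hsq)

/-- Let `q` be odd, and `𝔭, 𝔮, 𝔩` distinct monic irreducibles in `A = 𝔽_q[t]` with
`deg 𝔩 ≥ 2(deg 𝔭 + deg 𝔮) - 1`.  Then there are `a ∈ A` with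
`deg a ≤ deg 𝔭 + deg 𝔮 - 1` and `c ∈ 𝔽_q^×` such that `x² - a x + c𝔩` is irreducible
over each of the completions `F_𝔭`, `F_𝔮` and `F_∞`. -/
theorem exists_quadratic_irreducible_at_three_places
    (F : Type*) [Field F] [Fintype F] (hodd : Odd (Fintype.card F))
    (P Q L : Polynomial F)
    (hP : Irreducible P) (hPm : P.Monic)
    (hQ : Irreducible Q) (hQm : Q.Monic)
    (hL : Irreducible L) (hLm : L.Monic)
    (hPQ : P ≠ Q) (hPL : P ≠ L) (hQL : Q ≠ L)
    (hdeg : 2 * (P.natDegree + Q.natDegree) - 1 ≤ L.natDegree)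
    (vP vQ : HeightOneSpectrum (Polynomial F))
    (hvP : vP.asIdeal = Ideal.span {P}) (hvQ : vQ.asIdeal = Ideal.span {Q}) :
    ∃ (a : Polynomial F) (c : F), c ≠ 0 ∧
      a.natDegree ≤ P.natDegree + Q.natDegree - 1 ∧
      Irreducible ((X ^ 2 - C a * X + C (C c * L) : Polynomial (Polynomial F)).map
        ((algebraMap (RatFunc F) (vP.adicCompletion (RatFunc F))).comp
          (algebraMap (Polynomial F) (RatFunc F)))) ∧
      Irreducible ((X ^ 2 - C a * X + C (C c * L) : Polynomial (Polynomial F)).map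
        ((algebraMap (RatFunc F) (vQ.adicCompletion (RatFunc F))).comp
          (algebraMap (Polynomial F) (RatFunc F)))) ∧
      Irreducible ((X ^ 2 - C a * X + C (C c * L) : Polynomial (Polynomial F)).map
        (infPlace F)) := by
  have hv : vP ≠ vQ := fun h =>
    hPQ (eq_of_monic_of_span_singleton_eq hPm hQm (by rw [← hvP, h, hvQ]))
  have hdvd : ∀ i, ¬ ![P, Q] i ∣ L := Fin.forall_fin_two.2
    ⟨not_dvd_of_monic_of_irreducible_of_ne hP hPm hL hLm hPL,
      not_dvd_of_monic_of_irreducible_of_ne hQ hQm hL hLm hQL⟩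
  obtain ⟨a, c, hc, hdega, hfin, hinf⟩ := exists_quadratic_irreducible_at_three_places_general
    (v := ![vP, vQ]) (by simpa [Function.Injective, Fin.forall_fin_two, eq_comm] using hv)
    (P := ![P, Q]) (Fin.forall_fin_two.2 ⟨hvP, hvQ⟩) hL.ne_zero hdvd
    (.inl (ringChar_ne_two_of_odd_card hodd)) (by simpa [Fin.sum_univ_two] using hdeg)
  exact ⟨a, c, hc, by simpa [Fin.sum_univ_two] using hdega, hfin 0, hfin 1, hinf⟩
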